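/- Let p be an odd prime, H a Hopf algebra over k of index p such that H is unimodular and H* is not unimodular, and ω ∈ k a primitive p-th root of unity. Let d be the common value of dim H^ω_{0,i,j} − dim H^ω_{1,i,j} over all i, j ∈ Z_p. Then the trace of the linear map S^{2p} on H equals p²·d (as an element of k). -/

import Mathlib

open scoped TensorProduct

/-- A group-like element of a coalgebra: a nonzero element `a` with `Δ a = a ⊗ a`. -/
def IsGroupLike (k : Type*) {H : Type*} [CommSemiring k] [AddCommMonoid H] [Module k H]
    [Coalgebra k H] (a : H) : Prop :=
  a ≠ 0 ∧ Coalgebra.comul (R := k) a = a ⊗ₜ[k] a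

/-- The convolution product on the dual of a coalgebra. -/
noncomputable def conv {k H : Type*} [CommSemiring k] [AddCommMonoid H] [Module k H]
    [Coalgebra k H] (f g : Module.Dual k H) : Module.Dual k H :=
  LinearMap.mul' k k ∘ₗ TensorProduct.map f g ∘ₗ Coalgebra.comul

/-- `l ∈ H*` is a right integral of `H*`: `l * β = β(1) • l` for the convolution product. -/
def IsRightIntegralDual (k : Type*) {H : Type*} [CommSemiring k] [Semiring H]
    [HopfAlgebra k H] (l : Module.Dual k H) : Prop :=
  ∀ f : Module.Dual k H, conv l f = f 1 • l

/-- `Λ ∈ H` is a left integral of `H`: `a * Λ = ε(a) • Λ` for all `a`. -/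
def IsLeftIntegral (k : Type*) {H : Type*} [CommSemiring k] [Semiring H]
    [HopfAlgebra k H] (L : H) : Prop :=
  ∀ a : H, a * L = Coalgebra.counit (R := k) a • L

/-- `Λ ∈ H` is a right integral of `H`: `Λ * a = ε(a) • Λ` for all `a`. -/
def IsRightIntegral (k : Type*) {H : Type*} [CommSemiring k] [Semiring H]
    [HopfAlgebra k H] (L : H) : Prop :=
  ∀ a : H, L * a = Coalgebra.counit (R := k) a • L

/-- `g` is the distinguished group-like element of `H`: it is group-like and
`β * λ = β(g) • λ` for some nonzero right integral `λ` of `H*`. -/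
def IsDistinguishedGroupLike (k : Type*) {H : Type*} [CommSemiring k] [Semiring H]
    [HopfAlgebra k H] (g : H) : Prop :=
  IsGroupLike k g ∧ ∃ l : Module.Dual k H, l ≠ 0 ∧ IsRightIntegralDual k l ∧
    ∀ f : Module.Dual k H, conv f l = f g • l

/-- `α` is the distinguished group-like element of `H*`: an algebra map `H → k` with
`Λ * a = α(a) • Λ` for some nonzero left integral `Λ` of `H`. -/
def IsDistinguishedGroupLikeDual (k : Type*) {H : Type*} [CommSemiring k] [Semiring H]
    [HopfAlgebra k H] (α : H →ₐ[k] k) : Prop :=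
  ∃ L : H, L ≠ 0 ∧ IsLeftIntegral k L ∧ ∀ a : H, L * a = α a • L

/-- `IsHopfIndex k g n` : `n` is the index of the Hopf algebra `H` with distinguished
group-like element `g`, i.e. the smallest positive integer `n` with `S ^ (4 n) = id` and
`g ^ n = 1`, where `S` is the antipode. -/
def IsHopfIndex (k : Type*) {H : Type*} [CommSemiring k] [Semiring H] [HopfAlgebra k H]
    (g : H) (n : ℕ) : Prop :=
  0 < n ∧ (HopfAlgebra.antipode (R := k) (A := H) : Module.End k H) ^ (4 * n) = 1 ∧ g ^ n = 1 ∧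
    ∀ m : ℕ, 0 < m → (HopfAlgebra.antipode (R := k) (A := H) : Module.End k H) ^ (4 * m) = 1 →
      g ^ m = 1 → n ≤ m

/-- The simultaneous eigenspace `H^ω_{a,i,j} = {u ∈ H | S² u = (-1)^a ω^i • u, u * g = ω^j • u}`
for `(a,i,j) ∈ ℤ/2 × ℤ/n × ℤ/n`. -/
noncomputable def hopfEigenspace {k H : Type*} [CommRing k] [Ring H] [HopfAlgebra k H]
    (g : H) (ω : k) {n : ℕ} (t : ZMod 2 × ZMod n × ZMod n) : Submodule k H :=
  Module.End.eigenspace ((HopfAlgebra.antipode (R := k) (A := H) : Module.End k H) ^ 2)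
      ((-1 : k) ^ t.1.val * ω ^ t.2.1.val) ⊓
    Module.End.eigenspace (LinearMap.mulRight k g : Module.End k H) (ω ^ t.2.2.val)

/-- Convolution powers of an element of the dual; the zeroth power is the counit,
the unit of the convolution algebra. -/
noncomputable def convPow {k H : Type*} [CommSemiring k] [AddCommMonoid H] [Module k H]
    [Coalgebra k H] (f : Module.Dual k H) : ℕ → Module.Dual k H
  | 0 => Coalgebra.counit
  | m + 1 => conv f (convPow f m)

lemma IsGroupLike.isGroupLikeElem {k H : Type*} [Field k] [AddCommGroup H] [Module k H]
    [Coalgebra k H] {a : H} (ha : IsGroupLike k a) : IsGroupLikeElem k a := by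
  refine ⟨?_, ha.2⟩
  have h := Coalgebra.rTensor_counit_comul (R := k) a
  rw [ha.2, LinearMap.rTensor_tmul] at h
  have hlid := congrArg (TensorProduct.lid k H) h
  simp only [TensorProduct.lid_tmul, one_smul] at hlid
  exact smul_left_injective k ha.1 (by simpa using hlid)

/-- The square of the antipode commutes with right multiplication by a group-like element. -/
lemma IsGroupLikeElem.commute_antipode_sq_mulRight {k H : Type*} [CommRing k] [Ring H]
    [HopfAlgebra k H] {g : H} (hg : IsGroupLikeElem k g) :
    Commute ((HopfAlgebra.antipode (R := k) (A := H) : Module.End k H) ^ 2)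
      (LinearMap.mulRight k g) := by
  ext u
  simp [pow_two, HopfAlgebra.antipode_mul_antidistrib, hg]

section JointEigenspaces

open Module Module.End

variable {k V : Type*} [Field k] [AddCommGroup V] [Module k V]

lemma Module.End.isFinitelySemisimple_of_pow_eq_one [CharZero k] {f : End k V} {n : ℕ}
    (hn : n ≠ 0) (hf : f ^ n = 1) : f.IsFinitelySemisimple := by
  refine (isSemisimple_of_squarefree_aeval_eq_zero (p := Polynomial.X ^ n - 1) ?_
    (by simp [hf])).isFinitelySemisimple
  exact (Polynomial.X_pow_sub_one_separable_iff.mpr (by exact_mod_cast hn)).squarefree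

lemma Module.End.pow_eq_one_of_mem_eigenspace {f : End k V} {n : ℕ} (hf : f ^ n = 1)
    {c : k} {v : V} (hv : v ∈ f.eigenspace c) (hv0 : v ≠ 0) : c ^ n = 1 := by
  have h := (HasEigenvector.pow_apply ⟨hv, hv0⟩ n : (f ^ n) v = c ^ n • v)
  rw [hf, Module.End.one_apply] at h
  exact smul_left_injective k hv0 (by simpa using h.symm)

/-- Simultaneous eigenspaces of two commuting endomorphisms of finite order, indexed by a family
of pairs containing every pair of roots of unity of these orders, decompose the whole space. -/
lemma Module.End.isInternal_eigenspace_inf_eigenspace [FiniteDimensional k V]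
    [IsAlgClosed k] [CharZero k]
    {f g : End k V} (hfg : Commute f g) {m n : ℕ} (hm : m ≠ 0) (hn : n ≠ 0)
    (hf : f ^ m = 1) (hg : g ^ n = 1) {ι : Type*} [DecidableEq ι] {a b : ι → k}
    (hinj : Function.Injective fun i ↦ (a i, b i))
    (hsurj : ∀ x y : k, x ^ m = 1 → y ^ n = 1 → ∃ i, a i = x ∧ b i = y) :
    DirectSum.IsInternal fun i ↦ f.eigenspace (a i) ⊓ g.eigenspace (b i) := by
  let F : Bool → End k V := fun s ↦ cond s f g
  have hcomm (i j : Bool) : Commute (F i) (F j) := by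
    cases i <;> cases j <;> simp [F, hfg, hfg.symm]
  have hss (i : Bool) : (F i).IsFinitelySemisimple := by
    cases i
    exacts [isFinitelySemisimple_of_pow_eq_one hn hg, isFinitelySemisimple_of_pow_eq_one hm hf]
  have hE (χ : Bool → k) : ⨅ i, (F i).maxGenEigenspace (χ i) =
      f.eigenspace (χ true) ⊓ g.eigenspace (χ false) := by
    simp only [fun i ↦ (hss i).maxGenEigenspace_eq_eigenspace (χ i)]
    exact iInf_bool_eq
  have hmaps (i j : Bool) (c : k) := mapsTo_maxGenEigenspace_of_comm (hcomm j i) c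
  have hind := independent_iInf_maxGenEigenspace_of_forall_mapsTo F hmaps
  have htop := iSup_iInf_maxGenEigenspace_eq_top_of_forall_mapsTo F hmaps
    fun i ↦ iSup_maxGenEigenspace_eq_top (F i)
  simp only [hE] at hind htop
  rw [DirectSum.isInternal_submodule_iff_iSupIndep_and_iSup_eq_top]
  constructor
  · refine hind.comp (f := fun i s ↦ cond s (a i) (b i)) fun i j hij ↦ hinj ?_
    exact Prod.ext (congrFun hij true) (congrFun hij false)
  · rw [eq_top_iff, ← htop]
    refine iSup_le fun χ v hv ↦ ?_
    obtain rfl | hv0 := eq_or_ne v 0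
    · exact zero_mem _
    obtain ⟨i, hi, hi'⟩ := hsurj _ _ (pow_eq_one_of_mem_eigenspace hf hv.1 hv0)
      (pow_eq_one_of_mem_eigenspace hg hv.2 hv0)
    rw [← hi, ← hi'] at hv
    exact Submodule.mem_iSup_of_mem i hv

end JointEigenspaces

section RootsOfUnity

variable {k : Type*} [Field k] {p : ℕ} {ω : k}

lemma IsPrimitiveRoot.pow_val_injective [NeZero p] (hω : IsPrimitiveRoot ω p) :
    Function.Injective fun i : ZMod p ↦ ω ^ i.val := fun _ _ h ↦
  ZMod.val_injective p (hω.pow_inj (ZMod.val_lt _) (ZMod.val_lt _) h)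

lemma IsPrimitiveRoot.exists_pow_val_eq [NeZero p] (hω : IsPrimitiveRoot ω p) {x : k}
    (hx : x ^ p = 1) : ∃ i : ZMod p, ω ^ i.val = x := by
  obtain ⟨i, hi, rfl⟩ := hω.eq_pow_of_pow_eq_one hx
  exact ⟨i, by rw [ZMod.val_cast_of_lt hi]⟩

lemma IsPrimitiveRoot.neg_one_pow_mul_pow_pow (hω : IsPrimitiveRoot ω p) (hp : Odd p)
    (a i : ℕ) : ((-1) ^ a * ω ^ i) ^ p = (-1) ^ a := by
  rw [mul_pow, ← pow_mul, ← pow_mul, mul_comm i, pow_mul ω, hω.pow_eq_one, one_pow, mul_one,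
    mul_comm a, pow_mul, hp.neg_one_pow]

lemma neg_one_pow_zmod_two_val_injective [CharZero k] :
    Function.Injective fun a : ZMod 2 ↦ (-1 : k) ^ a.val := by
  refine Fin.forall_fin_two.mpr ⟨Fin.forall_fin_two.mpr ⟨?_, ?_⟩, Fin.forall_fin_two.mpr ⟨?_, ?_⟩⟩
  exacts [fun _ ↦ rfl, by norm_num [ZMod.val], by norm_num [ZMod.val], fun _ ↦ rfl]

end RootsOfUnity

/-- A Hopf algebra whose index is odd is the direct sum of its simultaneous eigenspaces. -/
lemma isInternal_hopfEigenspace {k : Type*} [Field k] [IsAlgClosed k] [CharZero k] {p : ℕ}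
    (hpodd : Odd p) {H : Type*} [Ring H] [HopfAlgebra k H] [FiniteDimensional k H] {g : H}
    (hg : IsGroupLikeElem k g) (hidx : IsHopfIndex k g p) {ω : k} (hω : IsPrimitiveRoot ω p) :
    DirectSum.IsInternal fun t : ZMod 2 × ZMod p × ZMod p ↦ hopfEigenspace g ω t := by
  obtain ⟨hp, hS, hgp, -⟩ := hidx
  have : NeZero p := ⟨hp.ne'⟩
  refine Module.End.isInternal_eigenspace_inf_eigenspace (m := 2 * p) (n := p)
    hg.commute_antipode_sq_mulRight (by simp [hp.ne']) hp.ne' ?_ ?_ ?_ ?_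
  · rw [← pow_mul, ← hS]; ring_nf
  · ext u; simp [LinearMap.pow_mulRight, hgp]
  · rintro ⟨a, i, j⟩ ⟨a', i', j'⟩ h
    obtain ⟨h₁, h₂⟩ := Prod.mk.inj h
    dsimp only at h₁ h₂
    have ha := congrArg (· ^ p) h₁
    simp only [hω.neg_one_pow_mul_pow_pow hpodd] at ha
    obtain rfl := neg_one_pow_zmod_two_val_injective ha
    obtain rfl := hω.pow_val_injective h₂
    obtain rfl := hω.pow_val_injective (mul_left_cancel₀ (by simp) h₁)
    rfl
  · intro x y hx hy
    obtain ⟨j, rfl⟩ := hω.exists_pow_val_eq hy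
    rw [mul_comm, pow_mul] at hx
    obtain hx | hx := mul_self_eq_one_iff.mp (pow_two (x ^ p) ▸ hx)
    · obtain ⟨i, rfl⟩ := hω.exists_pow_val_eq hx
      exact ⟨(0, i, j), by simp, rfl⟩
    · obtain ⟨i, hi⟩ := hω.exists_pow_val_eq (x := -x) (by rw [hpodd.neg_pow, hx, neg_neg])
      exact ⟨(1, i, j), by simp [hi, ZMod.val_one], rfl⟩

/-- The `p`-th power of the square of the antipode acts on each simultaneous eigenspace by a
sign. -/
lemma antipode_pow_apply_of_mem_hopfEigenspace {k : Type*} [Field k] {p : ℕ} (hpodd : Odd p)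
    {H : Type*} [Ring H] [HopfAlgebra k H] {g : H} {ω : k} (hω : IsPrimitiveRoot ω p)
    {t : ZMod 2 × ZMod p × ZMod p} {u : H} (hu : u ∈ hopfEigenspace g ω t) :
    ((HopfAlgebra.antipode (R := k) (A := H) : Module.End k H) ^ (2 * p)) u =
      (-1 : k) ^ t.1.val • u := by
  obtain rfl | hu0 := eq_or_ne u 0
  · simp
  rw [pow_mul, Module.End.HasEigenvector.pow_apply ⟨hu.1, hu0⟩, hω.neg_one_pow_mul_pow_pow hpodd]

/-- Lemma 5.7(ii). Let `p` be an odd prime, `H` a Hopf algebra of index `p`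
over an algebraically closed field of characteristic `0` such that `H` is unimodular and `H*`
is not unimodular, `ω` a primitive `p`-th root of unity, and let `d` be the common value of
`dim H^ω_{0,i,j} − dim H^ω_{1,i,j}` over all `i, j ∈ ℤ/p`. Then `Tr(S^{2p}) = p² d` in `k`. -/
theorem stmt10 (k : Type*) [Field k] [IsAlgClosed k] [CharZero k]
    (p : ℕ) (hp : p.Prime) (hpodd : Odd p)
    (H : Type*) [Ring H] [HopfAlgebra k H] [FiniteDimensional k H]
    (g : H) (hg : IsDistinguishedGroupLike k g) (hg1 : g ≠ 1) (hidx : IsHopfIndex k g p)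
    (huni : IsDistinguishedGroupLikeDual k (Bialgebra.counitAlgHom k H))
    (ω : k) (hω : IsPrimitiveRoot ω p)
    (d : ℤ)
    (hd : ∀ i j : ZMod p,
      (Module.finrank k (hopfEigenspace g ω ((0 : ZMod 2), i, j)) : ℤ) -
        (Module.finrank k (hopfEigenspace g ω ((1 : ZMod 2), i, j)) : ℤ) = d) :
    LinearMap.trace k H ((HopfAlgebra.antipode (R := k) (A := H) : Module.End k H) ^ (2 * p))
      = (p : k) ^ 2 * (d : k) := by
  have hmem (t : ZMod 2 × ZMod p × ZMod p) (u : H) (hu : u ∈ hopfEigenspace g ω t) :=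
    antipode_pow_apply_of_mem_hopfEigenspace (k := k) hpodd hω hu
  have hmaps (t : ZMod 2 × ZMod p × ZMod p) :
      Set.MapsTo ((HopfAlgebra.antipode (R := k) (A := H) : Module.End k H) ^ (2 * p))
        (hopfEigenspace g ω t) (hopfEigenspace g ω t) := fun u hu ↦ by
    rw [hmem t u hu]
    exact Submodule.smul_mem _ _ hu
  have htrace (t : ZMod 2 × ZMod p × ZMod p) :
      LinearMap.trace k (hopfEigenspace g ω t) (LinearMap.restrict _ (hmaps t)) =
        (-1 : k) ^ t.1.val * (Module.finrank k (hopfEigenspace g ω t) : k) := by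
    have : LinearMap.restrict _ (hmaps t) = (-1 : k) ^ t.1.val • LinearMap.id :=
      LinearMap.ext fun u ↦ Subtype.ext (hmem t u u.2)
    rw [this, map_smul, LinearMap.trace_id, smul_eq_mul]
  have : NeZero p := ⟨hp.ne_zero⟩
  rw [LinearMap.trace_eq_sum_trace_restrict
    (isInternal_hopfEigenspace hpodd hg.1.isGroupLikeElem hidx hω) hmaps]
  simp only [htrace]
  rw [Fintype.sum_prod_type_right]
  have hsum (x : ZMod p × ZMod p) : ∑ a : ZMod 2, (-1 : k) ^ a.val *
      (Module.finrank k (hopfEigenspace g ω (a, x)) : k) = d := by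
    rw [← hd x.1 x.2]
    change ∑ a : Fin 2, _ = _
    rw [Fin.sum_univ_two]
    simp only [ZMod.val, Fin.val_zero, Fin.val_one, pow_zero, pow_one, one_mul, neg_one_mul,
      ← sub_eq_add_neg, Int.cast_sub, Int.cast_natCast]
    rfl
  simp only [hsum]
  simp [ZMod.card, pow_two]
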